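/- arXiv:2401.12968 — 2 statements merged into one kernel-verified Lean document; each statement's English description precedes it below -/
import Mathlib

section
/- For every half-integer S ≥ 1/2, the approximation ratios satisfy the strict inequalities α_L(S) < α_GP(S) < α_BOV, where α_L(S) = (S/(S+1))² α_BOV, α_GP(S) = inf_{ρ∈[−1,0)} f_S(ρ), and α_BOV = inf_{ρ∈[−1,0)} g(ρ). -/
open Matrix MeasureTheory Filter
open scoped BigOperators RealInnerProductSpace Kronecker

noncomputable section

/-- The spin value `S = n/2` for a half-integer spin encoded by `n : ℕ` (`n ≥ 1` means `S ≥ 1/2`). -/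
def spinVal (n : ℕ) : ℝ := (n : ℝ) / 2

/-- The Gauss hypergeometric function `₂F₁(1/2, 1/2; 5/2; x)`, defined by its power series
`Σ_{k≥0} ((1/2)_k (1/2)_k)/((5/2)_k k!) x^k`, where `(a)_k` is the rising factorial. -/
def hypF (x : ℝ) : ℝ :=
  ∑' k : ℕ,
    ((∏ m ∈ Finset.range k, ((1:ℝ)/2 + m)) * (∏ m ∈ Finset.range k, ((1:ℝ)/2 + m))
      / ((∏ m ∈ Finset.range k, ((5:ℝ)/2 + m)) * (Nat.factorial k))) * x ^ k

/-- `F*(3, ρ) = (8/(3π)) ρ ₂F₁(1/2,1/2;5/2;ρ²)`. -/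
def Fstar (ρ : ℝ) : ℝ := (8 / (3 * Real.pi)) * ρ * hypF (ρ ^ 2)

/-- `f_S(ρ) = (1 − F*(3,ρ)) / (1 − ((S+1)/S) ρ)`. -/
def fS (S ρ : ℝ) : ℝ := (1 - Fstar ρ) / (1 - ((S + 1) / S) * ρ)

/-- `g(ρ) = (1 − F*(3,ρ)) / (1 − ρ)`. -/
def gBOV (ρ : ℝ) : ℝ := (1 - Fstar ρ) / (1 - ρ)

/-- `α_GP(S) = inf_{ρ ∈ [−1, 0)} f_S(ρ)`. -/
def alphaGP (S : ℝ) : ℝ := sInf (fS S '' Set.Ico (-1 : ℝ) 0)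

/-- `α_BOV = inf_{ρ ∈ [−1, 0)} g(ρ)`. -/
def alphaBOV : ℝ := sInf (gBOV '' Set.Ico (-1 : ℝ) 0)

/-!
For a numerator `h ≥ 1` on `[-1, 0)` write `R c = inf h ρ / (1 - c ρ)`; with `h = 1 - F*` one has
`α_BOV = R 1` and `α_GP(S) = R ((S + 1) / S)`.

On `[-1, 0)` the quotient `(1 - c ρ) / (1 - d ρ)`, `c ≤ d`, is at least its value
`(1 + c) / (1 + d)` at `ρ = -1`, so `α_GP(S) ≥ 2S / (2S + 1) α_BOV > (S / (S + 1))² α_BOV`.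

For the upper bound, `1 / R` is a supremum of affine functions of `c`, hence convex on `[0, ∞)`.
Since `R 0 ≥ 1`, as soon as `R d < 1` convexity forces `R d < R c` for every `0 < c < d`. That
`R d < 1` for `d > 1` is seen at `ρ = -1/3`, where bounding the hypergeometric series by a geometric
one and `π` by `3` already gives `F*(3, ρ) ≥ ρ`.
-/

section InfRatio

/-- The infimum of `h ρ / (1 - c ρ)` over `ρ ∈ [-1, 0)`: the common form, with numerator
`h = 1 - F*`, of `α_BOV` (`c = 1`) and of `α_GP(S)` (`c = (S + 1) / S`). -/
def infRatio (h : ℝ → ℝ) (c : ℝ) : ℝ :=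
  sInf ((fun ρ => h ρ / (1 - c * ρ)) '' Set.Ico (-1 : ℝ) 0)

variable {h : ℝ → ℝ} {b c d m : ℝ}

lemma one_sub_mul_pos {ρ : ℝ} (hc : 0 ≤ c) (hρ : ρ ≤ 0) : 0 < 1 - c * ρ := by
  linarith [mul_nonpos_of_nonneg_of_nonpos hc hρ]

lemma le_infRatio_iff (hc : 0 ≤ c) (hh : ∀ ρ ∈ Set.Ico (-1 : ℝ) 0, 0 ≤ h ρ) :
    b ≤ infRatio h c ↔ ∀ ρ ∈ Set.Ico (-1 : ℝ) 0, b * (1 - c * ρ) ≤ h ρ := by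
  have hpos (ρ : ℝ) (hρ : ρ ∈ Set.Ico (-1 : ℝ) 0) : 0 < 1 - c * ρ := one_sub_mul_pos hc hρ.2.le
  have hbdd : BddBelow ((fun ρ => h ρ / (1 - c * ρ)) '' Set.Ico (-1 : ℝ) 0) :=
    ⟨0, Set.forall_mem_image.2 fun ρ hρ => div_nonneg (hh ρ hρ) (hpos ρ hρ).le⟩
  have hne : (Set.Ico (-1 : ℝ) 0).Nonempty := Set.nonempty_Ico.2 (by norm_num)
  rw [infRatio, le_csInf_iff hbdd (hne.image _), Set.forall_mem_image]
  exact forall₂_congr fun ρ hρ => le_div_iff₀ (hpos ρ hρ)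

lemma infRatio_lt_iff (hc : 0 ≤ c) (hh : ∀ ρ ∈ Set.Ico (-1 : ℝ) 0, 0 ≤ h ρ) :
    infRatio h c < b ↔ ∃ ρ ∈ Set.Ico (-1 : ℝ) 0, h ρ < b * (1 - c * ρ) := by
  simpa only [not_le, not_forall, exists_prop] using (le_infRatio_iff (b := b) hc hh).not

lemma infRatio_nonneg (hc : 0 ≤ c) (hh : ∀ ρ ∈ Set.Ico (-1 : ℝ) 0, 0 ≤ h ρ) :
    0 ≤ infRatio h c :=
  (le_infRatio_iff hc hh).2 fun ρ hρ => by simpa only [zero_mul] using hh ρ hρ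

lemma infRatio_pos (hc : 0 ≤ c) (hm : 0 < m) (hh : ∀ ρ ∈ Set.Ico (-1 : ℝ) 0, m ≤ h ρ) :
    0 < infRatio h c := by
  suffices m / (1 + c) ≤ infRatio h c from lt_of_lt_of_le (by positivity) this
  refine (le_infRatio_iff hc fun ρ hρ => hm.le.trans (hh ρ hρ)).2 fun ρ hρ => ?_
  calc m / (1 + c) * (1 - c * ρ) ≤ m / (1 + c) * (1 + c) := by
        gcongr
        nlinarith [hρ.1]
    _ = m := div_mul_cancel₀ m (by positivity)
    _ ≤ h ρ := hh ρ hρ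

lemma div_mul_infRatio_le (hc : 0 ≤ c) (hcd : c ≤ d)
    (hh : ∀ ρ ∈ Set.Ico (-1 : ℝ) 0, 0 ≤ h ρ) :
    (1 + c) / (1 + d) * infRatio h c ≤ infRatio h d := by
  have hd : 0 ≤ d := hc.trans hcd
  refine (le_infRatio_iff hd hh).2 fun ρ hρ => ?_
  have hfactor : (1 + c) / (1 + d) * (1 - d * ρ) ≤ 1 - c * ρ := by
    rw [div_mul_eq_mul_div, div_le_iff₀ (by positivity)]
    linarith [mul_nonneg (sub_nonneg.2 hcd) (neg_le_iff_add_nonneg.1 hρ.1)]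
  calc (1 + c) / (1 + d) * infRatio h c * (1 - d * ρ)
      = infRatio h c * ((1 + c) / (1 + d) * (1 - d * ρ)) := by ring
    _ ≤ infRatio h c * (1 - c * ρ) := mul_le_mul_of_nonneg_left hfactor (infRatio_nonneg hc hh)
    _ ≤ h ρ := (le_infRatio_iff hc hh).1 le_rfl ρ hρ

lemma inv_infRatio_le_iff (hb : 0 < b) (hc : 0 ≤ c) (hm : 0 < m)
    (hh : ∀ ρ ∈ Set.Ico (-1 : ℝ) 0, m ≤ h ρ) :
    (infRatio h c)⁻¹ ≤ b ↔ ∀ ρ ∈ Set.Ico (-1 : ℝ) 0, 1 - c * ρ ≤ b * h ρ := by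
  rw [inv_le_comm₀ (infRatio_pos hc hm hh) hb,
    le_infRatio_iff hc fun ρ hρ => hm.le.trans (hh ρ hρ)]
  exact forall₂_congr fun ρ _ => inv_mul_le_iff₀ hb

lemma convexOn_inv_infRatio (hm : 0 < m) (hh : ∀ ρ ∈ Set.Ico (-1 : ℝ) 0, m ≤ h ρ) :
    ConvexOn ℝ (Set.Ici 0) fun c => (infRatio h c)⁻¹ := by
  refine convexOn_iff_forall_pos.2 ⟨convex_Ici 0, fun c hc d hd s t hs ht hst => ?_⟩
  simp only [Set.mem_Ici, smul_eq_mul] at hc hd ⊢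
  have hRc : 0 < (infRatio h c)⁻¹ := inv_pos.2 (infRatio_pos hc hm hh)
  have hRd : 0 < (infRatio h d)⁻¹ := inv_pos.2 (infRatio_pos hd hm hh)
  refine (inv_infRatio_le_iff (by positivity) (by positivity) hm hh).2 fun ρ hρ => ?_
  have hle_c := (inv_infRatio_le_iff hRc hc hm hh).1 le_rfl ρ hρ
  have hle_d := (inv_infRatio_le_iff hRd hd hm hh).1 le_rfl ρ hρ
  calc 1 - (s * c + t * d) * ρ = s * (1 - c * ρ) + t * (1 - d * ρ) := by
        linear_combination -hst
    _ ≤ s * ((infRatio h c)⁻¹ * h ρ) + t * ((infRatio h d)⁻¹ * h ρ) := by gcongr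
    _ = (s * (infRatio h c)⁻¹ + t * (infRatio h d)⁻¹) * h ρ := by ring

lemma infRatio_lt_infRatio (hc : 0 < c) (hcd : c < d) (hm : 0 < m)
    (hh : ∀ ρ ∈ Set.Ico (-1 : ℝ) 0, m ≤ h ρ) (hlt : infRatio h d < infRatio h 0) :
    infRatio h d < infRatio h c := by
  have hd : 0 < d := hc.trans hcd
  have hRpos {x : ℝ} (hx : 0 ≤ x) : 0 < infRatio h x := infRatio_pos hx hm hh
  by_contra! hle
  have hinv_le : (infRatio h d)⁻¹ ≤ (infRatio h c)⁻¹ := inv_anti₀ (hRpos hc.le) hle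
  have hinv_lt : (infRatio h 0)⁻¹ < (infRatio h d)⁻¹ := inv_strictAnti₀ (hRpos hd.le) hlt
  have hmem : c ∈ openSegment ℝ 0 d := by rw [openSegment_eq_Ioo hd]; exact ⟨hc, hcd⟩
  exact hinv_le.not_gt <| (convexOn_inv_infRatio hm hh).lt_right_of_left_lt
    Set.self_mem_Ici hd.le hmem (hinv_lt.trans_le hinv_le)

end InfRatio

section Hypergeometric

/-- The coefficient `(a)_k (b)_k / ((c)_k k!)` of `x ^ k` in the Gauss series `₂F₁(a, b; c; x)`,
with the rising factorials written as products, as in `hypF`. -/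
def gaussCoeff (a b c : ℝ) (k : ℕ) : ℝ :=
  (∏ i ∈ Finset.range k, (a + i)) * (∏ i ∈ Finset.range k, (b + i))
    / ((∏ i ∈ Finset.range k, (c + i)) * k.factorial)

variable {a b c x ρ : ℝ}

lemma gaussCoeff_nonneg (ha : 0 ≤ a) (hb : 0 ≤ b) (hc : 0 ≤ c) (k : ℕ) :
    0 ≤ gaussCoeff a b c k := by
  unfold gaussCoeff
  positivity

lemma gaussCoeff_le_one (ha : 0 ≤ a) (hac : a ≤ c) (hb : 0 ≤ b) (hb1 : b ≤ 1) (k : ℕ) :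
    gaussCoeff a b c k ≤ 1 := by
  have hc : 0 ≤ c := ha.trans hac
  have hnum : ∏ i ∈ Finset.range k, (a + i) ≤ ∏ i ∈ Finset.range k, (c + i) := by gcongr
  have hfact : ∏ i ∈ Finset.range k, (b + i) ≤ k.factorial := by
    rw [← Finset.prod_range_add_one_eq_factorial]
    push_cast
    exact Finset.prod_le_prod (fun i _ => by positivity) fun i _ => by linarith
  unfold gaussCoeff
  exact div_le_one_of_le₀ (by gcongr) (by positivity)

lemma tsum_mul_pow_le_inv_one_sub {u : ℕ → ℝ} (hu0 : ∀ k, 0 ≤ u k) (hu1 : ∀ k, u k ≤ 1)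
    (hx0 : 0 ≤ x) (hx1 : x < 1) : ∑' k, u k * x ^ k ≤ (1 - x)⁻¹ := by
  have hgeom : HasSum (fun k => x ^ k) (1 - x)⁻¹ := hasSum_geometric_of_lt_one hx0 hx1
  have hle (k : ℕ) : u k * x ^ k ≤ x ^ k := mul_le_of_le_one_left (by positivity) (hu1 k)
  have hsum : Summable fun k => u k * x ^ k :=
    hgeom.summable.of_nonneg_of_le (fun k => mul_nonneg (hu0 k) (by positivity)) hle
  exact hasSum_le hle hsum.hasSum hgeom

lemma hypF_eq_tsum_gaussCoeff (x : ℝ) :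
    hypF x = ∑' k, gaussCoeff (1 / 2) (1 / 2) (5 / 2) k * x ^ k :=
  rfl

lemma hypF_nonneg (hx : 0 ≤ x) : 0 ≤ hypF x := by
  rw [hypF_eq_tsum_gaussCoeff]
  exact tsum_nonneg fun k =>
    mul_nonneg (gaussCoeff_nonneg (by norm_num) (by norm_num) (by norm_num) k) (pow_nonneg hx k)

lemma hypF_le_inv_one_sub (hx0 : 0 ≤ x) (hx1 : x < 1) : hypF x ≤ (1 - x)⁻¹ := by
  rw [hypF_eq_tsum_gaussCoeff]
  exact tsum_mul_pow_le_inv_one_sub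
    (gaussCoeff_nonneg (by norm_num) (by norm_num) (by norm_num))
    (gaussCoeff_le_one (by norm_num) (by norm_num) (by norm_num) (by norm_num)) hx0 hx1

lemma Fstar_nonpos (hρ : ρ ≤ 0) : Fstar ρ ≤ 0 :=
  mul_nonpos_of_nonpos_of_nonneg (mul_nonpos_of_nonneg_of_nonpos (by positivity) hρ)
    (hypF_nonneg (sq_nonneg ρ))

lemma le_Fstar (hρ : -(1 / 3) ≤ ρ) (hρ0 : ρ ≤ 0) : ρ ≤ Fstar ρ := by
  have hsq : ρ ^ 2 ≤ 1 / 9 := by nlinarith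
  have hpi : 8 / (3 * Real.pi) ≤ 8 / 9 := by
    gcongr
    linarith [Real.pi_gt_three]
  have hhyp : hypF (ρ ^ 2) ≤ 9 / 8 :=
    calc hypF (ρ ^ 2) ≤ (1 - ρ ^ 2)⁻¹ := hypF_le_inv_one_sub (sq_nonneg ρ) (by linarith)
      _ ≤ (8 / 9)⁻¹ := inv_anti₀ (by norm_num) (by linarith)
      _ = 9 / 8 := by norm_num
  have hfactor : 8 / (3 * Real.pi) * hypF (ρ ^ 2) ≤ 1 :=
    calc 8 / (3 * Real.pi) * hypF (ρ ^ 2) ≤ 8 / 9 * (9 / 8) :=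
          mul_le_mul hpi hhyp (hypF_nonneg (sq_nonneg ρ)) (by norm_num)
      _ = 1 := by norm_num
  calc ρ ≤ 8 / (3 * Real.pi) * hypF (ρ ^ 2) * ρ := le_mul_of_le_one_left hρ0 hfactor
    _ = Fstar ρ := by unfold Fstar; ring

end Hypergeometric

lemma alphaBOV_eq_infRatio : alphaBOV = infRatio (1 - Fstar) 1 := by
  simp only [infRatio, one_mul]
  rfl

lemma alphaGP_eq_infRatio (S : ℝ) : alphaGP S = infRatio (1 - Fstar) ((S + 1) / S) :=
  rfl

lemma one_le_one_sub_Fstar {ρ : ℝ} (hρ : ρ ≤ 0) : 1 ≤ (1 - Fstar) ρ :=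
  (le_sub_self_iff 1).2 (Fstar_nonpos hρ)

lemma infRatio_one_sub_Fstar_lt_infRatio_zero {d : ℝ} (hd : 1 < d) :
    infRatio (1 - Fstar) d < infRatio (1 - Fstar) 0 := by
  have hnonneg (ρ : ℝ) (hρ : ρ ∈ Set.Ico (-1 : ℝ) 0) : 0 ≤ (1 - Fstar) ρ :=
    zero_le_one.trans (one_le_one_sub_Fstar hρ.2.le)
  calc infRatio (1 - Fstar) d < 1 := by
        refine (infRatio_lt_iff (by linarith) hnonneg).2 ⟨-(1 / 3), by norm_num, ?_⟩
        have hF : -(1 / 3) ≤ Fstar (-(1 / 3)) := le_Fstar le_rfl (by norm_num)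
        simp only [Pi.sub_apply, Pi.one_apply]
        linarith
    _ ≤ infRatio (1 - Fstar) 0 := (le_infRatio_iff le_rfl hnonneg).2 fun ρ hρ => by
        simpa only [zero_mul, sub_zero, mul_one] using one_le_one_sub_Fstar hρ.2.le

lemma sq_div_add_one_lt {S : ℝ} (hS : 0 < S) :
    (S / (S + 1)) ^ 2 < (1 + 1) / (1 + (S + 1) / S) := by
  have hrhs : (1 + 1) / (1 + (S + 1) / S) = 2 * S / (2 * S + 1) := by
    field_simp
    ring
  rw [hrhs, div_pow, div_lt_div_iff₀ (by positivity) (by positivity)]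
  nlinarith [pow_pos hS 2]

lemma spinVal_pos {n : ℕ} (hn : 1 ≤ n) : 0 < spinVal n := by
  unfold spinVal
  positivity

theorem alphaL_lt_alphaGP_lt_alphaBOV_general (S : ℝ) (hS : 0 < S) :
    (S / (S + 1)) ^ 2 * alphaBOV < alphaGP S ∧ alphaGP S < alphaBOV := by
  have hd : 1 < (S + 1) / S := (one_lt_div hS).2 (lt_add_one S)
  have hone (ρ : ℝ) (hρ : ρ ∈ Set.Ico (-1 : ℝ) 0) : 1 ≤ (1 - Fstar) ρ :=
    one_le_one_sub_Fstar hρ.2.le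
  rw [alphaBOV_eq_infRatio, alphaGP_eq_infRatio]
  constructor
  · calc (S / (S + 1)) ^ 2 * infRatio (1 - Fstar) 1
        < (1 + 1) / (1 + (S + 1) / S) * infRatio (1 - Fstar) 1 :=
          mul_lt_mul_of_pos_right (sq_div_add_one_lt hS)
            (infRatio_pos zero_le_one one_pos hone)
      _ ≤ infRatio (1 - Fstar) ((S + 1) / S) :=
          div_mul_infRatio_le zero_le_one hd.le fun ρ hρ => zero_le_one.trans (hone ρ hρ)
  · exact infRatio_lt_infRatio one_pos hd one_pos hone
      (infRatio_one_sub_Fstar_lt_infRatio_zero hd)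

/-- For every half-integer `S ≥ 1/2`, the approximation ratios satisfy
`α_L(S) < α_GP(S) < α_BOV`, where `α_L(S) = (S/(S+1))² α_BOV`. -/
theorem alphaL_lt_alphaGP_lt_alphaBOV (n : ℕ) (hn : 1 ≤ n) :
    (spinVal n / (spinVal n + 1)) ^ 2 * alphaBOV < alphaGP (spinVal n)
      ∧ alphaGP (spinVal n) < alphaBOV := by
  exact alphaL_lt_alphaGP_lt_alphaBOV_general (spinVal n) (spinVal_pos hn)

end
end

section
/- For every half-integer S ≥ 1/2, the infimum of f_S over the interval [−1, S/(S+1)) equals the infimum of f_S over [−1, 0), and this infimum is attained at some point of [−1, 0). -/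
open Matrix MeasureTheory Filter
open scoped BigOperators RealInnerProductSpace Kronecker

noncomputable section

/-
The coefficients of `₂F₁(1/2, 1/2; 5/2; x)` are nonnegative, and Euler's integral writes them as
integrals of `1 - x²` against the terms of the binomial series of `1 / √(1 - y)` at `y = x²`:
`(1/2)_k (1/2)_k / ((5/2)_k k!) = (3/4) ∫_{-1}^{1} (1 - x²) (1/2)_k / k! x^{2k}`. Hence their sum is
at most `(3/4) ∫_{-1}^{1} √(1 - x²) = 3π/8`, so `F*` is continuous on `[-1, 1]` and
`F*(3, ρ) ≤ ρ` on `[0, 1]`. This gives `f_S ≥ 1` on `[0, S/(S+1))`, whereas oddness of `F*` gives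
`f_S(-1) ≤ 2 / (1 + (S+1)/S) < 1`. The minimum of `f_S` on the compact interval `[-1, 0]` is
therefore below `1`: it is not attained at `0`, and no nonnegative `ρ` can do better.
-/

lemma sInf_image_eq_of_isMinOn {α β : Type*} [ConditionallyCompleteLattice β] {f : α → β}
    {s : Set α} {a : α} (h : IsMinOn f s a) (ha : a ∈ s) : sInf (f '' s) = f a :=
  IsLeast.csInf_eq ⟨Set.mem_image_of_mem f ha, Set.forall_mem_image.2 h⟩

lemma factorial_mul_multichoose_eq_prod_range {R : Type*} [CommSemiring R] [BinomialRing R]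
    (a : R) (k : ℕ) :
    (k.factorial : R) * Ring.multichoose a k = ∏ m ∈ Finset.range k, (a + m) := by
  rw [← nsmul_eq_mul, Ring.factorial_nsmul_multichoose_eq_ascPochhammer,
    Polynomial.ascPochhammer_smeval_eq_eval]
  induction k with
  | zero => simp
  | succ k ih => rw [ascPochhammer_succ_eval, ih, Finset.prod_range_succ]

lemma multichoose_nonneg {R : Type*} [CommRing R] [LinearOrder R] [IsStrictOrderedRing R]
    [BinomialRing R] {a : R} (ha : 0 ≤ a) (k : ℕ) : 0 ≤ Ring.multichoose a k := by
  have hprod : 0 ≤ (k.factorial : R) * Ring.multichoose a k := by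
    rw [factorial_mul_multichoose_eq_prod_range]
    exact Finset.prod_nonneg fun m _ => by positivity
  exact nonneg_of_mul_nonneg_right hprod (by positivity)

lemma hasSum_multichoose_mul_pow (a : ℝ) {x : ℝ} (hx : |x| < 1) :
    HasSum (fun k => Ring.multichoose a k * x ^ k) (1 / (1 - x) ^ a) := by
  have hball : x ∈ Metric.eball (0 : ℝ) 1 := by
    simpa [enorm_eq_nnnorm] using! hx
  simpa [Ring.multichoose_eq, mul_comm] using
    (Real.one_div_one_sub_rpow_hasFPowerSeriesOnBall_zero a).hasSum hball

lemma sum_multichoose_mul_pow_le {a x : ℝ} (ha : 0 ≤ a) (hx0 : 0 ≤ x) (hx1 : x < 1) (N : ℕ) :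
    ∑ k ∈ Finset.range N, Ring.multichoose a k * x ^ k ≤ 1 / (1 - x) ^ a :=
  sum_le_hasSum _ (fun k _ => mul_nonneg (multichoose_nonneg ha k) (pow_nonneg hx0 k))
    (hasSum_multichoose_mul_pow a (by rwa [abs_of_nonneg hx0]))

lemma one_sub_mul_sum_multichoose_half_le_sqrt {x : ℝ} (hx : x ∈ Set.Icc (0 : ℝ) 1) (N : ℕ) :
    (1 - x) * ∑ k ∈ Finset.range N, Ring.multichoose (1 / 2 : ℝ) k * x ^ k ≤ √(1 - x) := by
  rcases hx.2.eq_or_lt with rfl | hx1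
  · simp
  · calc (1 - x) * ∑ k ∈ Finset.range N, Ring.multichoose (1 / 2 : ℝ) k * x ^ k
        ≤ (1 - x) * (1 / (1 - x) ^ (1 / 2 : ℝ)) :=
          mul_le_mul_of_nonneg_left (sum_multichoose_mul_pow_le (by norm_num) hx.1 hx1 N)
            (sub_nonneg.2 hx.2)
      _ = √(1 - x) := by rw [← Real.sqrt_eq_rpow, mul_one_div, Real.div_sqrt]

lemma integral_one_sub_sq_mul_sq_pow (k : ℕ) :
    ∫ x in (-1 : ℝ)..1, (1 - x ^ 2) * (x ^ 2) ^ k = 4 / ((2 * (k : ℝ) + 1) * (2 * k + 3)) := by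
  have hexpand : ∀ x : ℝ, (1 - x ^ 2) * (x ^ 2) ^ k = x ^ (2 * k) - x ^ (2 * k + 2) :=
    fun x => by ring
  have hodd₁ : (-1 : ℝ) ^ (2 * k + 1) = -1 := Odd.neg_one_pow ⟨k, rfl⟩
  have hodd₃ : (-1 : ℝ) ^ (2 * k + 2 + 1) = -1 := Odd.neg_one_pow ⟨k + 1, by ring⟩
  simp_rw [hexpand]
  rw [intervalIntegral.integral_sub (by simp) (by simp), integral_pow, integral_pow, hodd₁, hodd₃]
  push_cast
  field_simp
  ring

lemma mul_prod_range_add_two {R : Type*} [CommSemiring R] (a : R) (k : ℕ) :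
    a * (a + 1) * ∏ m ∈ Finset.range k, (a + 2 + m)
      = (∏ m ∈ Finset.range k, (a + m)) * ((a + k) * (a + k + 1)) := by
  induction k with
  | zero => simp
  | succ k ih =>
    rw [Finset.prod_range_succ, Finset.prod_range_succ, ← mul_assoc, ih]
    push_cast
    ring

/-- The coefficient `(1/2)_k (1/2)_k / ((5/2)_k k!)` of `x ^ k` in `hypF x`, in the form in which it
occurs there, so that `hypF x = ∑' k, hypFCoeff k * x ^ k` holds definitionally. -/
def hypFCoeff (k : ℕ) : ℝ :=
  (∏ m ∈ Finset.range k, ((1:ℝ)/2 + m)) * (∏ m ∈ Finset.range k, ((1:ℝ)/2 + m))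
    / ((∏ m ∈ Finset.range k, ((5:ℝ)/2 + m)) * (Nat.factorial k))

lemma hypFCoeff_eq_multichoose (k : ℕ) :
    hypFCoeff k = 3 * Ring.multichoose (1 / 2 : ℝ) k / ((2 * k + 1) * (2 * k + 3)) := by
  have hfact := factorial_mul_multichoose_eq_prod_range (1 / 2 : ℝ) k
  have hshift := mul_prod_range_add_two (1 / 2 : ℝ) k
  rw [show (1 / 2 : ℝ) + 2 = 5 / 2 by norm_num] at hshift
  have hpos : 0 < ∏ m ∈ Finset.range k, ((5 : ℝ) / 2 + m) :=
    Finset.prod_pos fun m _ => by positivity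
  rw [hypFCoeff, div_eq_div_iff (by positivity) (by positivity)]
  rw [← hfact] at hshift ⊢
  linear_combination (-4 * (k.factorial : ℝ) * Ring.multichoose (1 / 2 : ℝ) k) * hshift

lemma hypFCoeff_nonneg (k : ℕ) : 0 ≤ hypFCoeff k := by
  have hnonneg : 0 ≤ Ring.multichoose (1 / 2 : ℝ) k := multichoose_nonneg (by norm_num) k
  rw [hypFCoeff_eq_multichoose]
  positivity

lemma hypFCoeff_eq_integral (k : ℕ) :
    hypFCoeff k = 3 / 4 *
      ∫ x in (-1 : ℝ)..1, (1 - x ^ 2) * (Ring.multichoose (1 / 2 : ℝ) k * (x ^ 2) ^ k) := by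
  simp_rw [mul_left_comm (1 - _ ^ 2 : ℝ)]
  rw [intervalIntegral.integral_const_mul, integral_one_sub_sq_mul_sq_pow, hypFCoeff_eq_multichoose]
  ring

lemma sum_hypFCoeff_le (N : ℕ) : ∑ k ∈ Finset.range N, hypFCoeff k ≤ 3 * Real.pi / 8 :=
  calc ∑ k ∈ Finset.range N, hypFCoeff k
      = 3 / 4 * ∫ x in (-1 : ℝ)..1,
          (1 - x ^ 2) * ∑ k ∈ Finset.range N, Ring.multichoose (1 / 2 : ℝ) k * (x ^ 2) ^ k := by
        simp_rw [hypFCoeff_eq_integral, Finset.mul_sum (Finset.range N)]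
        rw [intervalIntegral.integral_finsetSum fun k _ =>
          Continuous.intervalIntegrable (by fun_prop) _ _, Finset.mul_sum]
    _ ≤ 3 / 4 * ∫ x in (-1 : ℝ)..1, √(1 - x ^ 2) := by
        gcongr
        refine intervalIntegral.integral_mono_on (by norm_num)
          (Continuous.intervalIntegrable (by fun_prop) _ _)
          (Continuous.intervalIntegrable (by fun_prop) _ _) fun x hx => ?_
        exact one_sub_mul_sum_multichoose_half_le_sqrt
          ⟨sq_nonneg x, (sq_le_one_iff_abs_le_one x).2 (abs_le.2 hx)⟩ N
    _ = 3 * Real.pi / 8 := by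
        rw [integral_sqrt_one_sub_sq]
        ring

lemma summable_hypFCoeff : Summable hypFCoeff :=
  summable_of_sum_range_le hypFCoeff_nonneg sum_hypFCoeff_le

lemma norm_hypFCoeff_mul_pow_le {x : ℝ} (hx : |x| ≤ 1) (k : ℕ) :
    ‖hypFCoeff k * x ^ k‖ ≤ hypFCoeff k := by
  rw [norm_mul, norm_pow, Real.norm_of_nonneg (hypFCoeff_nonneg k), Real.norm_eq_abs]
  exact mul_le_of_le_one_right (hypFCoeff_nonneg k) (pow_le_one₀ (abs_nonneg x) hx)

lemma hypF_le {x : ℝ} (hx : |x| ≤ 1) : hypF x ≤ 3 * Real.pi / 8 :=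
  calc hypF x ≤ ∑' k, hypFCoeff k :=
        (summable_hypFCoeff.of_norm_bounded (norm_hypFCoeff_mul_pow_le hx)).tsum_le_tsum
          (fun k => (Real.le_norm_self _).trans (norm_hypFCoeff_mul_pow_le hx k)) summable_hypFCoeff
    _ ≤ 3 * Real.pi / 8 := summable_hypFCoeff.tsum_le_of_sum_range_le sum_hypFCoeff_le

lemma continuousOn_hypF : ContinuousOn hypF (Set.Icc (-1) 1) :=
  continuousOn_tsum (f := fun k x => hypFCoeff k * x ^ k) (fun k => by fun_prop)
    summable_hypFCoeff fun k _ hx => norm_hypFCoeff_mul_pow_le (abs_le.2 hx) k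

lemma continuousOn_Fstar : ContinuousOn Fstar (Set.Icc (-1) 1) := by
  have hsq : Set.MapsTo (fun ρ : ℝ => ρ ^ 2) (Set.Icc (-1) 1) (Set.Icc (-1) 1) := fun ρ hρ =>
    ⟨by linarith [sq_nonneg ρ], (sq_le_one_iff_abs_le_one ρ).2 (abs_le.2 hρ)⟩
  exact ContinuousOn.mul (by fun_prop) (continuousOn_hypF.comp (by fun_prop) hsq)

lemma Fstar_le_self {ρ : ℝ} (h0 : 0 ≤ ρ) (h1 : ρ ≤ 1) : Fstar ρ ≤ ρ :=
  calc Fstar ρ = 8 / (3 * Real.pi) * ρ * hypF (ρ ^ 2) := rfl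
    _ ≤ 8 / (3 * Real.pi) * ρ * (3 * Real.pi / 8) := by
        gcongr
        exact hypF_le (by rw [abs_of_nonneg (sq_nonneg ρ)]; exact pow_le_one₀ h0 h1)
    _ = ρ := by field_simp

lemma Fstar_neg (ρ : ℝ) : Fstar (-ρ) = -Fstar ρ := by
  rw [Fstar, Fstar, neg_sq]
  ring

lemma one_lt_add_one_div_self {S : ℝ} (hS : 0 < S) : 1 < (S + 1) / S :=
  (one_lt_div hS).2 (lt_add_one S)

lemma add_one_div_self_mul_lt_one {S ρ : ℝ} (hS : 0 < S) (hρ : ρ < S / (S + 1)) :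
    (S + 1) / S * ρ < 1 := by
  rwa [← inv_div, inv_mul_lt_one₀ (by positivity)]

lemma continuousOn_fS {S : ℝ} (hS : 0 < S) :
    ContinuousOn (fS S) (Set.Ico (-1) (S / (S + 1))) := by
  have hle : S / (S + 1) ≤ 1 := (div_le_one (by positivity)).2 (by linarith)
  have hsub : Set.Ico (-1) (S / (S + 1)) ⊆ Set.Icc (-1) 1 := fun ρ hρ =>
    ⟨hρ.1, hρ.2.le.trans hle⟩
  exact (continuousOn_const.sub (continuousOn_Fstar.mono hsub)).div (by fun_prop)
    fun ρ hρ => (sub_pos.2 (add_one_div_self_mul_lt_one hS hρ.2)).ne'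

lemma one_le_fS {S ρ : ℝ} (hS : 0 < S) (h0 : 0 ≤ ρ) (hρ : ρ < S / (S + 1)) : 1 ≤ fS S ρ := by
  have hden := add_one_div_self_mul_lt_one hS hρ
  have hself : ρ ≤ (S + 1) / S * ρ := le_mul_of_one_le_left h0 (one_lt_add_one_div_self hS).le
  have hF : Fstar ρ ≤ ρ := Fstar_le_self h0 (hself.trans hden.le)
  rw [fS, one_le_div (sub_pos.2 hden)]
  linarith

lemma fS_neg_one_lt_one {S : ℝ} (hS : 0 < S) : fS S (-1) < 1 := by
  have hc := one_lt_add_one_div_self hS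
  have hF : Fstar 1 ≤ 1 := Fstar_le_self zero_le_one le_rfl
  rw [fS, Fstar_neg, div_lt_one (by linarith)]
  linarith

lemma exists_isMinOn_fS {S : ℝ} (hS : 0 < S) :
    ∃ ρ ∈ Set.Ico (-1 : ℝ) 0, IsMinOn (fS S) (Set.Ico (-1) (S / (S + 1))) ρ := by
  have hpos : 0 < S / (S + 1) := by positivity
  obtain ⟨r, hr, hmin⟩ := isCompact_Icc.exists_isMinOn (Set.nonempty_Icc.2 (by norm_num))
    ((continuousOn_fS hS).mono (Set.Icc_subset_Ico_right hpos))
  have hlt : fS S r < 1 :=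
    (hmin (Set.left_mem_Icc.2 (by norm_num))).trans_lt (fS_neg_one_lt_one hS)
  have hr0 : r < 0 := by
    by_contra! h
    exact hlt.not_ge (one_le_fS hS h (hr.2.trans_lt hpos))
  refine ⟨r, ⟨hr.1, hr0⟩, fun ρ hρ => ?_⟩
  rcases le_total ρ 0 with hneg | hnonneg
  · exact hmin ⟨hρ.1, hneg⟩
  · exact hlt.le.trans (one_le_fS hS hnonneg hρ.2)

theorem fS_inf_attained_general (S : ℝ) (hS : 0 < S) :
    sInf (fS S '' Set.Ico (-1 : ℝ) (S / (S + 1))) = sInf (fS S '' Set.Ico (-1 : ℝ) 0)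
      ∧ ∃ ρ ∈ Set.Ico (-1 : ℝ) 0, fS S ρ = sInf (fS S '' Set.Ico (-1 : ℝ) 0) := by
  obtain ⟨r, hr, hmin⟩ := exists_isMinOn_fS hS
  have hsub : Set.Ico (-1 : ℝ) 0 ⊆ Set.Ico (-1) (S / (S + 1)) :=
    Set.Ico_subset_Ico_right (by positivity)
  have hsInf := sInf_image_eq_of_isMinOn (hmin.on_subset hsub) hr
  exact ⟨(sInf_image_eq_of_isMinOn hmin (hsub hr)).trans hsInf.symm, r, hr, hsInf.symm⟩

/-- For every half-integer `S ≥ 1/2`, the infimum of `f_S` over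
`[−1, S/(S+1))` equals the infimum of `f_S` over `[−1, 0)`, and this infimum is attained
at some point of `[−1, 0)`. -/
theorem fS_inf_attained (n : ℕ) (hn : 1 ≤ n) :
    sInf (fS (spinVal n) '' Set.Ico (-1 : ℝ) (spinVal n / (spinVal n + 1)))
        = sInf (fS (spinVal n) '' Set.Ico (-1 : ℝ) 0)
      ∧ ∃ ρ ∈ Set.Ico (-1 : ℝ) 0,
          fS (spinVal n) ρ = sInf (fS (spinVal n) '' Set.Ico (-1 : ℝ) 0) :=
  fS_inf_attained_general (spinVal n) (half_pos (Nat.cast_pos.2 hn))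

end
end
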